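/- If f and g are functions adherent to G with f[U] ⊆ g[U], then there exists a function h adherent to G with g ∘ h = f (i.e. g⁻¹ ∘ f is adherent to G). If moreover f[U] = g[U], then this h is a bijection of U onto U. -/

import Mathlib

/-- `f` is adherent to the subgroup `G` of permutations of `U`:
for every finite set `F` there is `g ∈ G` agreeing with `f` on `F`. -/
def IsAdherent {U : Type*} (G : Subgroup (Equiv.Perm U)) (f : U → U) : Prop :=
  ∀ F : Finset U, ∃ g ∈ G, ∀ x ∈ F, f x = g x

/-- `C` is a copy for the group `G`: the range of a function adherent to `G`. -/
def IsCopy {U : Type*} (G : Subgroup (Equiv.Perm U)) (C : Set U) : Prop :=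
  ∃ f : U → U, IsAdherent G f ∧ Set.range f = C

namespace IsAdherent

variable {U : Type*} {G : Subgroup (Equiv.Perm U)} {g h : U → U}

theorem injective (hg : IsAdherent G g) : Function.Injective g := by
  classical
  intro x y hxy
  obtain ⟨p, -, hp⟩ := hg {x, y}
  apply p.injective
  rw [← hp x (by simp), ← hp y (by simp), hxy]

theorem of_comp (hgh : IsAdherent G (g ∘ h)) (hg : IsAdherent G g) : IsAdherent G h := by
  classical
  intro F
  obtain ⟨p, hpG, hp⟩ := hgh F
  obtain ⟨q, hqG, hq⟩ := hg (F.image h)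
  refine ⟨q⁻¹ * p, mul_mem (inv_mem hqG) hpG, fun x hx => ?_⟩
  have hqp : q (h x) = p x :=
    calc
      q (h x) = g (h x) := (hq (h x) (Finset.mem_image_of_mem h hx)).symm
      _ = p x := hp x hx
  exact Equiv.Perm.eq_inv_iff_eq.mpr hqp

end IsAdherent

theorem surjective_of_range_comp_eq_range {α β γ : Type*} {g : β → γ} {h : α → β}
    (hg : Function.Injective g) (hrange : Set.range (g ∘ h) = Set.range g) :
    Function.Surjective h := by
  rw [← Set.range_eq_univ]
  apply hg.image_injective
  rw [← Set.range_comp, hrange, Set.image_univ]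

theorem exists_adherent_factor_general {U : Type*}
    (G : Subgroup (Equiv.Perm U)) (f g : U → U)
    (hf : IsAdherent G f) (hg : IsAdherent G g)
    (hsub : Set.range f ⊆ Set.range g) :
    ∃ h : U → U, IsAdherent G h ∧ g ∘ h = f ∧
      (Set.range f = Set.range g → Function.Bijective h) := by
  obtain ⟨h, rfl⟩ := Set.range_subset_range_iff_exists_comp.mp hsub
  have hh : IsAdherent G h := hf.of_comp hg
  exact ⟨h, hh, rfl, fun hrange =>
    ⟨hh.injective, surjective_of_range_comp_eq_range hg.injective hrange⟩⟩

/-- Theorem: if `f, g` are adherent to `G` with `range f ⊆ range g`, then there is `h`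
adherent to `G` with `g ∘ h = f`; if moreover `range f = range g`, this `h` is a
bijection of `U` onto `U`. -/
theorem exists_adherent_factor {U : Type*} [Countable U] [Infinite U]
    (G : Subgroup (Equiv.Perm U)) (f g : U → U)
    (hf : IsAdherent G f) (hg : IsAdherent G g)
    (hsub : Set.range f ⊆ Set.range g) :
    ∃ h : U → U, IsAdherent G h ∧ g ∘ h = f ∧
      (Set.range f = Set.range g → Function.Bijective h) :=
  exists_adherent_factor_general G f g hf hg hsub
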